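/- Given a finite tree T whose vertex set is partitioned into clusters each of size at most 2, there exists a subset X of vertices containing exactly one vertex from each cluster, together with a tree structure on X in which each edge joins two vertices whose distance in T is at most 3. -/

import Mathlib

/-!
Call a matching connected if its vertices induce a connected subgraph. In a connected graph with at
least one edge, a maximal connected matching is dominating: otherwise some edge `ab` leaves the
dominated region, so `a` and `b` are unmatched, `a` is adjacent to a matched vertex, and `ab` can be
added.

Since matching edges and clusters both partition the vertices they cover, into pairs and into sets
of size at most 2, Hall's theorem assigns distinct clusters to the matching edges they touch. Hence
there is a choice of representatives hitting every matching edge. Every matched vertex is then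
within distance 1 of a representative, so walks among the matched vertices turn into sequences of
representatives with steps of length at most `1 + 1 + 1`, and any spanning tree will do.
-/

open Function Finset

section Transversal

theorem exists_rightInverse_forall_exists_mem {ι κ V : Type*} {k : ℕ} (hk : 0 < k) {c : V → κ}
    (hc : Surjective c) (hfiber : ∀ j, (c ⁻¹' {j}).encard ≤ k) {B : ι → Finset V}
    (hdisj : Pairwise (Disjoint on B)) (hcard : ∀ i, k ≤ #(B i)) :
    ∃ s : κ → V, RightInverse s c ∧ ∀ i, ∃ j, s j ∈ B i := by
  classical
  have hall (I : Finset ι) : #I ≤ #(I.biUnion fun i ↦ (B i).image c) := by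
    refine Nat.le_of_mul_le_mul_left ?_ hk
    calc
      k * #I ≤ ∑ i ∈ I, #(B i) := by
        simpa [mul_comm] using card_nsmul_le_sum I (fun i ↦ #(B i)) k fun i _ ↦ hcard i
      _ = #(I.biUnion B) := (card_biUnion fun _ _ _ _ hij ↦ hdisj hij).symm
      _ ≤ k * #((I.biUnion B).image c) := by
        refine card_le_mul_card_image _ k fun j _ ↦ ?_
        rw [← Nat.cast_le (α := ℕ∞), ← Set.encard_coe_eq_coe_finsetCard]
        exact (Set.encard_le_encard fun v hv ↦ (mem_filter.1 hv).2).trans (hfiber j)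
      _ = k * #(I.biUnion fun i ↦ (B i).image c) := by rw [biUnion_image]
  obtain ⟨f, hf, hfB⟩ := (all_card_le_biUnion_card_iff_exists_injective _).1 hall
  choose b hbB hbf using fun i ↦ mem_image.1 (hfB i)
  refine ⟨extend f b (surjInv hc), fun j ↦ ?_, fun i ↦ ⟨f i, ?_⟩⟩
  · by_cases hj : ∃ i, f i = j
    · obtain ⟨i, rfl⟩ := hj
      rw [hf.extend_apply, hbf]
    · rw [extend_apply' _ _ _ hj, surjInv_eq hc]
  · rw [hf.extend_apply]
    exact hbB i

theorem exists_transversal_forall_exists_mem {ι V : Type*} {k : ℕ} (hk : 0 < k)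
    {P : Set (Finset V)} (hne : ∀ C ∈ P, C.Nonempty) (hsize : ∀ C ∈ P, #C ≤ k)
    (hP : P.PairwiseDisjoint id) (hcover : ∀ v, ∃ C ∈ P, v ∈ C) {B : ι → Finset V}
    (hdisj : Pairwise (Disjoint on B)) (hcard : ∀ i, k ≤ #(B i)) :
    ∃ X : Set V, (∀ C ∈ P, (X ∩ C).ncard = 1) ∧ ∀ i, ∃ x ∈ X, x ∈ B i := by
  choose cluster hclusterP hmem using hcover
  have cluster_eq {v : V} {C : Finset V} (hC : C ∈ P) (hv : v ∈ C) : cluster v = C :=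
    hP.elim_finset (hclusterP v) hC v (hmem v) hv
  let c : V → P := fun v ↦ ⟨cluster v, hclusterP v⟩
  have hc : Surjective c := fun ⟨C, hC⟩ ↦
    let ⟨v, hv⟩ := hne C hC
    ⟨v, Subtype.ext (cluster_eq hC hv)⟩
  have hfiber (C : P) : (c ⁻¹' {C}).encard ≤ k := by
    refine (Set.encard_le_encard (t := (C.1 : Set V)) ?_).trans ?_
    · rintro v rfl
      exact hmem v
    · rw [Set.encard_coe_eq_coe_finsetCard]
      exact_mod_cast hsize C C.2
  obtain ⟨s, hs, hsB⟩ := exists_rightInverse_forall_exists_mem hk hc hfiber hdisj hcard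
  refine ⟨Set.range s, fun C hC ↦ Set.ncard_eq_one.2 ⟨s ⟨C, hC⟩, ?_⟩, by simpa using hsB⟩
  have cluster_s (D : P) : cluster (s D) = D := congrArg Subtype.val (hs D)
  ext x
  constructor
  · rintro ⟨⟨D, rfl⟩, hx⟩
    have hDC : D = ⟨C, hC⟩ := Subtype.ext ((cluster_s D).symm.trans (cluster_eq hC hx))
    rw [hDC, Set.mem_singleton_iff]
  · rintro rfl
    have hmem_C : s ⟨C, hC⟩ ∈ C := by simpa only [cluster_s] using hmem (s ⟨C, hC⟩)
    exact ⟨⟨_, rfl⟩, hmem_C⟩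

end Transversal

open SimpleGraph

section Matching

variable {V : Type*} {G : SimpleGraph V} {M : G.Subgraph}

theorem pairwise_disjoint_toFinset_of_isMatching [DecidableEq V] (hM : M.IsMatching) :
    Pairwise (Disjoint on fun e : M.edgeSet ↦ e.1.toFinset) := by
  rintro ⟨e, he⟩ ⟨f, hf⟩ hef
  refine disjoint_left.2 fun v hve hvf ↦ hef ?_
  obtain ⟨u, rfl⟩ := Sym2.mem_toFinset.1 hve
  obtain ⟨w, rfl⟩ := Sym2.mem_toFinset.1 hvf
  exact Subtype.ext (congrArg (s(v, ·)) (hM.eq_of_adj_left he hf))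

theorem exists_transversal_forall_adj {P : Set (Finset V)} (hne : ∀ C ∈ P, C.Nonempty)
    (hsize : ∀ C ∈ P, #C ≤ 2) (hP : P.PairwiseDisjoint id) (hcover : ∀ v, ∃ C ∈ P, v ∈ C)
    (hM : M.IsMatching) :
    ∃ X : Set V, (∀ C ∈ P, (X ∩ C).ncard = 1) ∧ ∀ ⦃u v⦄, M.Adj u v → u ∈ X ∨ v ∈ X := by
  classical
  obtain ⟨X, hX, hXM⟩ := exists_transversal_forall_exists_mem two_pos hne hsize hP hcover
    (pairwise_disjoint_toFinset_of_isMatching hM) fun e ↦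
      (Sym2.card_toFinset_of_not_isDiag _ (G.not_isDiag_of_mem_edgeSet (M.edgeSet_subset e.2))).ge
  refine ⟨X, hX, fun u v huv ↦ ?_⟩
  obtain ⟨x, hxX, hx⟩ := hXM ⟨s(u, v), huv⟩
  rcases Sym2.mem_iff.1 (Sym2.mem_toFinset.1 hx) with rfl | rfl
  exacts [.inl hxX, .inr hxX]

theorem isMatching_sSup_of_isChain {c : Set G.Subgraph} (hc : IsChain (· ≤ ·) c)
    (hmatch : ∀ M ∈ c, M.IsMatching) : (sSup c).IsMatching := by
  intro v hv
  obtain ⟨M, hMc, hvM⟩ := Set.mem_iUnion₂.1 (Subgraph.verts_sSup c ▸ hv)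
  obtain ⟨w, hvw, -⟩ := hmatch M hMc hvM
  refine ⟨w, Subgraph.sSup_adj.2 ⟨M, hMc, hvw⟩, fun x hvx ↦ ?_⟩
  obtain ⟨N, hNc, hvxN⟩ := Subgraph.sSup_adj.1 hvx
  rcases hc.total hMc hNc with hMN | hNM
  · exact (hmatch N hNc).eq_of_adj_left hvxN (hMN.2 hvw)
  · exact (hmatch M hMc).eq_of_adj_left (hNM.2 hvxN) hvw

/-- A *connected matching* is a matching whose vertices induce a connected subgraph of `G`;
in particular it is nonempty. -/
structure IsConnectedMatching (M : G.Subgraph) : Prop where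
  isMatching : M.IsMatching
  connected : (G.induce M.verts).Connected

theorem isConnectedMatching_subgraphOfAdj {u v : V} (huv : G.Adj u v) :
    IsConnectedMatching (G.subgraphOfAdj huv) :=
  ⟨.subgraphOfAdj huv, induce_pair_connected_of_adj huv⟩

theorem IsConnectedMatching.sup_subgraphOfAdj (hM : IsConnectedMatching M) {u a b : V}
    (hu : u ∈ M.verts) (ha : a ∉ M.verts) (hb : b ∉ M.verts) (hua : G.Adj u a)
    (hab : G.Adj a b) : IsConnectedMatching (M ⊔ G.subgraphOfAdj hab) where
  isMatching := by
    refine hM.isMatching.sup (.subgraphOfAdj hab) ?_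
    rw [hM.isMatching.support_eq_verts, support_subgraphOfAdj]
    simp [ha, hb]
  connected :=
    connected_induce_union hM.connected.preconnected
      (induce_pair_connected_of_adj hab).preconnected hu (Set.mem_insert a _) hua

theorem IsConnectedMatching.sSup_of_isChain {c : Set G.Subgraph} (hc : IsChain (· ≤ ·) c)
    (hne : c.Nonempty) (hconn : ∀ M ∈ c, IsConnectedMatching M) :
    IsConnectedMatching (sSup c) where
  isMatching := isMatching_sSup_of_isChain hc fun M hM ↦ (hconn M hM).isMatching
  connected := by
    rw [Subgraph.verts_sSup, ← Set.sUnion_image]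
    refine induce_sUnion_connected_of_pairwise_not_disjoint (hne.image _) ?_ ?_
    · rintro _ _ ⟨M, hM, rfl⟩ ⟨N, hN, rfl⟩
      have hMne : M.verts.Nonempty := Set.nonempty_coe_sort.1 (hconn M hM).connected.nonempty
      have hNne : N.verts.Nonempty := Set.nonempty_coe_sort.1 (hconn N hN).connected.nonempty
      rcases hc.total hM hN with hMN | hNM
      · rwa [Set.inter_eq_left.2 hMN.1]
      · rwa [Set.inter_eq_right.2 hNM.1]
    · rintro _ ⟨M, hM, rfl⟩
      exact (hconn M hM).connected

theorem exists_edist_le_one_of_maximal_isConnectedMatching (hG : G.Connected)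
    (hM : Maximal IsConnectedMatching M) (v : V) : ∃ w ∈ M.verts, G.edist v w ≤ 1 := by
  simp only [edist_le_one_iff_adj_or_eq]
  by_contra hv
  let D : Set V := {a | ∃ w ∈ M.verts, G.Adj a w ∨ a = w}
  have verts_subset : M.verts ⊆ D := fun w hw ↦ ⟨w, hw, .inr rfl⟩
  obtain ⟨u₀, hu₀⟩ : M.verts.Nonempty := Set.nonempty_coe_sort.1 hM.prop.connected.nonempty
  obtain ⟨p⟩ := hG.preconnected u₀ v
  obtain ⟨⟨⟨a, b⟩, hab⟩, -, haD, hbD⟩ := p.exists_boundary_dart D (verts_subset hu₀) hv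
  have ha : a ∉ M.verts := fun ha ↦ hbD ⟨a, ha, .inl hab.symm⟩
  have hb : b ∉ M.verts := fun hb ↦ hbD (verts_subset hb)
  obtain ⟨u, hu, hau | rfl⟩ := haD
  · have hle := hM.le_of_ge (hM.prop.sup_subgraphOfAdj hu ha hb hau.symm hab) le_sup_left
    exact ha (hle.1 (.inr (Set.mem_insert a _)))
  · exact ha hu

theorem exists_isConnectedMatching_forall_edist_le_one [Nontrivial V] (hG : G.Connected) :
    ∃ M : G.Subgraph, IsConnectedMatching M ∧ ∀ v, ∃ w ∈ M.verts, G.edist v w ≤ 1 := by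
  obtain ⟨u⟩ := hG.nonempty
  obtain ⟨v, huv⟩ := hG.preconnected.exists_adj_of_nontrivial u
  obtain ⟨M, -, hM⟩ := zorn_le_nonempty₀ {M : G.Subgraph | IsConnectedMatching M}
    (fun c hcM hc M hM ↦ ⟨sSup c, .sSup_of_isChain hc ⟨M, hM⟩ hcM, fun _ ↦ le_sSup⟩)
    _ (isConnectedMatching_subgraphOfAdj huv)
  exact ⟨M, hM.prop, exists_edist_le_one_of_maximal_isConnectedMatching hG hM⟩

end Matching

section Power

variable {V : Type*} {G : SimpleGraph V} {X : Set V}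

/-- The `k`-th power of `G`: distinct vertices are adjacent if they are at distance at most `k`
in `G`. The distance is `edist`, since `dist` is `0` between different components. -/
def graphPower (G : SimpleGraph V) (k : ℕ) : SimpleGraph V where
  Adj u v := u ≠ v ∧ G.edist u v ≤ k
  symm := ⟨fun _ _ h ↦ ⟨h.1.symm, G.edist_comm ▸ h.2⟩⟩
  loopless := ⟨fun _ h ↦ h.1 rfl⟩

theorem reachable_induce_graphPower_of_edist_le {k : ℕ} {x y : X} (h : G.edist x y ≤ k) :
    ((graphPower G k).induce X).Reachable x y := by
  rcases eq_or_ne x y with rfl | hxy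
  · rfl
  · exact Adj.reachable ⟨Subtype.coe_injective.ne hxy, h⟩

theorem connected_induce_graphPower {S : Set V} {r : ℕ} (hS : (G.induce S).Connected)
    (hSX : ∀ s ∈ S, ∃ x ∈ X, G.edist s x ≤ r) (hXS : ∀ x ∈ X, ∃ s ∈ S, G.edist x s ≤ r) :
    ((graphPower G (2 * r + 1)).induce X).Connected := by
  choose f hfX hf using hSX
  let rep (s : S) : X := ⟨f s s.2, hfX s s.2⟩
  have reachable_rep (x : X) (s t : S) (hxs : G.edist x s ≤ r) (hst : G.edist s t ≤ 1) :
      ((graphPower G (2 * r + 1)).induce X).Reachable x (rep t) :=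
    reachable_induce_graphPower_of_edist_le <| calc
      G.edist x (rep t) ≤ G.edist x s + (G.edist s t + G.edist t (rep t)) :=
        G.edist_triangle.trans (by gcongr; exact G.edist_triangle)
      _ ≤ r + (1 + r) := by gcongr; exact hf t t.2
      _ = (2 * r + 1 : ℕ) := by push_cast; ring
  have reachable_rep_rep (s t : S) :
      ((graphPower G (2 * r + 1)).induce X).Reachable (rep s) (rep t) := by
    obtain ⟨p⟩ := hS.preconnected s t
    induction p with
    | nil => rfl
    | @cons s s' _ hadj _ ih =>
      have hstep := reachable_rep (rep s) s s' (G.edist_comm.trans_le (hf s s.2))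
        (edist_eq_one_iff_adj.2 (induce_adj.1 hadj)).le
      exact hstep.trans ih
  obtain ⟨s₀⟩ := hS.nonempty
  refine connected_iff_exists_forall_reachable _ |>.2 ⟨rep s₀, fun x ↦ ?_⟩
  obtain ⟨s, hs, hxs⟩ := hXS x x.2
  exact (reachable_rep_rep s₀ ⟨s, hs⟩).trans (reachable_rep x ⟨s, hs⟩ ⟨s, hs⟩ hxs (by simp)).symm

theorem exists_isMatching_forall_connected_induce_graphPower_three (hG : G.Connected) :
    ∃ M : G.Subgraph, M.IsMatching ∧ ∀ X : Set V, X.Nonempty →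
      (∀ ⦃u v⦄, M.Adj u v → u ∈ X ∨ v ∈ X) → ((graphPower G 3).induce X).Connected := by
  rcases subsingleton_or_nontrivial V with _ | _
  · refine ⟨⊥, fun _ hv ↦ hv.elim, fun X hX _ ↦ ?_⟩
    have := hX.to_subtype
    exact ⟨.of_subsingleton⟩
  obtain ⟨M, hM, hdom⟩ := exists_isConnectedMatching_forall_edist_le_one hG
  refine ⟨M, hM.isMatching, fun X _ hXM ↦
    connected_induce_graphPower (r := 1) hM.connected (fun u hu ↦ ?_) fun x _ ↦ hdom x⟩
  obtain ⟨v, huv, -⟩ := hM.isMatching hu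
  rcases hXM huv with hX | hX
  · exact ⟨u, hX, by simp⟩
  · exact ⟨v, hX, (edist_eq_one_iff_adj.2 huv.adj_sub).le⟩

end Power

theorem gbst_representatives_tree_general {V : Type*} {G : SimpleGraph V} (hG : G.Connected)
    {P : Set (Finset V)} (hne : ∀ C ∈ P, C.Nonempty) (hsize : ∀ C ∈ P, #C ≤ 2)
    (hP : P.PairwiseDisjoint id) (hcover : ∀ v, ∃ C ∈ P, v ∈ C) :
    ∃ X : Set V, (∀ C ∈ P, (X ∩ C).ncard = 1) ∧
      ∃ H : SimpleGraph X, H.IsTree ∧ ∀ u v : X, H.Adj u v → G.dist u v ≤ 3 := by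
  obtain ⟨M, hM, hconn⟩ := exists_isMatching_forall_connected_induce_graphPower_three hG
  obtain ⟨X, hXP, hXM⟩ := exists_transversal_forall_adj hne hsize hP hcover hM
  have hX : X.Nonempty := by
    obtain ⟨v⟩ := hG.nonempty
    obtain ⟨C, hC, -⟩ := hcover v
    exact (Set.nonempty_of_ncard_ne_zero (hXP C hC ▸ one_ne_zero)).left
  obtain ⟨H, hle, hH⟩ := (hconn X hX hXM).exists_isTree_le
  exact ⟨X, hXP, H, hH, fun u v huv ↦ ENat.toNat_le_of_le_natCast (hle huv).2⟩

/-- Given a finite tree `G` whose vertex set is partitioned into clusters of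
size at most 2, there is a set `X` of vertices containing exactly one vertex
from each cluster, together with a tree structure on `X` all of whose edges
join vertices at distance at most `3` in `G`. -/
theorem gbst_representatives_tree {V : Type*} [Fintype V] [DecidableEq V]
    (G : SimpleGraph V) (hG : G.IsTree)
    (P : Finset (Finset V))
    (hne : ∀ C ∈ P, C.Nonempty)
    (hsize : ∀ C ∈ P, C.card ≤ 2)
    (hdisj : ∀ C ∈ P, ∀ D ∈ P, C ≠ D → Disjoint C D)
    (hcover : P.biUnion id = Finset.univ) :
    ∃ X : Finset V, (∀ C ∈ P, (X ∩ C).card = 1) ∧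
      ∃ H : SimpleGraph {x // x ∈ X}, H.IsTree ∧
        ∀ u v : {x // x ∈ X}, H.Adj u v → G.dist u.1 v.1 ≤ 3 := by
  obtain ⟨X, hX, hH⟩ := gbst_representatives_tree_general (P := P) hG.connected hne hsize
    (fun C hC D hD ↦ hdisj C hC D hD) (by simpa using Finset.ext_iff.1 hcover)
  lift X to Finset V using X.toFinite
  exact ⟨X, fun C hC ↦ by simpa [← coe_inter] using hX C hC, hH⟩
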